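/- arXiv:1502.06571 — 3 statements merged into one kernel-verified Lean document; each statement's English description precedes it below -/
import Mathlib

section
/- Every seminorm s on ℝ² satisfies (1/2)·𝓘²_avg(s) ≤ 𝓘²_+(s) ≤ 𝓘²_avg(s), i.e., for n = p = 2 the constant λ in the comparison of 𝓘^p_+ and 𝓘^p_avg can be taken equal to 1. -/
/-! The constant `1/2` comes from `H¹(S¹) = 2π`: the integral of `s²` over the circle is at most
`2π · max s²`, and the unit disc has area `π`.

For the other inequality, fix a unit vector `v₀`. By Hahn–Banach there is a vector `a` with
`|⟪a, v⟫| ≤ s v` for all `v` and `⟪a, v₀⟫ = s v₀` (`exists_inner_le_seminorm`), so `‖a‖ ≥ s v₀`.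
The quarter turn preserves `H¹` on `S¹` and turns `⟪a, v⟫²` into `‖a‖²‖v‖² - ⟪a, v⟫²`, hence
`∫_{S¹} ⟪a, v⟫² dH¹ = ‖a‖² H¹(S¹) / 2 = π ‖a‖²` (`setIntegral_inner_sq`). Therefore
`∫_{S¹} s² dH¹ ≥ π ‖a‖² ≥ π s(v₀)²`.

The length of the circle is computed in `ℂ`. The upper bound holds since `t ↦ exp (i t)` is
`1`-Lipschitz. For the lower bound, an arc of angle `2h` is the disjoint union of an arc of angle
`h` and a rotated copy of it, so `H¹(S¹)` is `2ⁿ` times the length of an arc of angle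
`2π / 2ⁿ`; projecting to the imaginary axis bounds this below by `2ⁿ sin (2π / 2ⁿ) → 2π`. -/

open MeasureTheory Metric

/-- `𝓘^p_+(s) = max{s(v)^p : v ∈ S^{n-1}}`, realized as the supremum over the unit sphere. -/
noncomputable def Iplus (n : ℕ) (p : ℝ) (s : Seminorm ℝ (EuclideanSpace ℝ (Fin n))) : ℝ :=
  ⨆ v : sphere (0 : EuclideanSpace ℝ (Fin n)) 1, (s v.1) ^ p

/-- `𝓘^p_avg(s) = ω_n⁻¹ ∫_{S^{n-1}} s(v)^p dH^{n-1}(v)`. -/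
noncomputable def Iavg (n : ℕ) (p : ℝ) (s : Seminorm ℝ (EuclideanSpace ℝ (Fin n))) : ℝ :=
  (volume (ball (0 : EuclideanSpace ℝ (Fin n)) 1)).toReal⁻¹ *
    ∫ v in sphere (0 : EuclideanSpace ℝ (Fin n)) 1, (s v) ^ p ∂(μH[(n : ℝ) - 1])

open Set Filter Topology
open scoped RealInnerProductSpace

lemma circleMap_add_arc (h x : ℝ) :
    circleMap 0 1 (x + h) = rotation (Circle.exp h) (circleMap 0 1 x) := by
  simp [circleMap, rotation_apply, Circle.coe_exp, ← Complex.exp_add]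
  ring_nf

/-- The second half of an arc of angle `2h` is the first half rotated by `h`; the bound `h ≤ π`
keeps the two halves disjoint. -/
lemma hausdorffMeasure_arc_two_mul {h : ℝ} (h0 : 0 ≤ h) (hpi : h ≤ Real.pi) :
    (μH[1] : Measure ℂ) (circleMap 0 1 '' Ioc 0 (2 * h)) =
      2 * (μH[1] : Measure ℂ) (circleMap 0 1 '' Ioc 0 h) := by
  have hinj : InjOn (circleMap 0 1) (Ioc 0 (2 * h)) := by
    have := injOn_circleMap_of_abs_sub_le (a := 0) (b := 2 * h) (c := 0) (R := 1) one_ne_zero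
      (by rw [zero_sub, abs_neg, abs_of_nonneg (by positivity)]; linarith)
    rwa [uIoc_of_le (by positivity)] at this
  have hU : Ioc 0 (2 * h) = Ioc 0 h ∪ Ioc h (2 * h) :=
    (Ioc_union_Ioc_eq_Ioc h0 (by linarith)).symm
  have hsub : Ioc h (2 * h) ⊆ Ioc 0 (2 * h) := Ioc_subset_Ioc_left h0
  have hrot : circleMap 0 1 '' Ioc h (2 * h) =
      (rotation (Circle.exp h)).toIsometryEquiv '' (circleMap 0 1 '' Ioc 0 h) := by
    have : Ioc h (2 * h) = (fun x => x + h) '' Ioc 0 h := by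
      rw [image_add_const_Ioc]; ring_nf
    rw [this, image_image, image_image]
    exact image_congr fun x _ => circleMap_add_arc h x
  have hdisj : Disjoint (circleMap 0 1 '' Ioc 0 h) (circleMap 0 1 '' Ioc h (2 * h)) := by
    rw [disjoint_iff_inter_eq_empty,
      ← hinj.image_inter (Ioc_subset_Ioc_right (by linarith)) hsub,
      (Ioc_disjoint_Ioc_of_le le_rfl).inter_eq, image_empty]
  rw [hU, image_union, measure_union hdisj, hrot, IsometryEquiv.hausdorffMeasure_image, two_mul]
  exact measurableSet_Ioc.image_of_continuousOn_injOn (continuous_circleMap 0 1).continuousOn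
    (hinj.mono hsub)

lemma ofReal_sin_le_hausdorffMeasure_arc {h : ℝ} (h0 : 0 ≤ h) :
    ENNReal.ofReal (Real.sin h) ≤ (μH[1] : Measure ℂ) (circleMap 0 1 '' Ioc 0 h) := by
  have hlip : LipschitzWith 1 Complex.im :=
    LipschitzWith.of_dist_le_mul fun x y => by
      simpa [Real.dist_eq, dist_eq_norm] using Complex.abs_im_le_norm (x - y)
  have hle := hlip.hausdorffMeasure_image_le (d := 1) zero_le_one (circleMap 0 1 '' Ioc 0 h)
  have hivt : Ioc (Real.sin 0) (Real.sin h) ⊆ Real.sin '' Ioc 0 h :=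
    intermediate_value_Ioc h0 Real.continuous_sin.continuousOn
  have him : Complex.im '' (circleMap 0 1 '' Ioc 0 h) = Real.sin '' Ioc 0 h := by
    rw [image_image]
    exact image_congr fun x _ => by simp [circleMap, Complex.exp_ofReal_mul_I_im]
  rw [him, hausdorffMeasure_real] at hle
  simpa using (measure_mono hivt).trans hle

lemma hausdorffMeasure_arc_two_pi (n : ℕ) :
    (μH[1] : Measure ℂ) (circleMap 0 1 '' Ioc 0 (2 * Real.pi)) =
      2 ^ n * (μH[1] : Measure ℂ) (circleMap 0 1 '' Ioc 0 (2 * Real.pi / 2 ^ n)) := by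
  induction n with
  | zero => simp
  | succ k ih =>
    have hpos := Real.pi_pos
    have h1 : 2 * Real.pi / 2 ^ (k + 1) ≤ Real.pi := by
      rw [div_le_iff₀ (by positivity), pow_succ]
      nlinarith [one_le_pow₀ (n := k) (one_le_two : (1 : ℝ) ≤ 2)]
    have h2 : 2 * Real.pi / 2 ^ k = 2 * (2 * Real.pi / 2 ^ (k + 1)) := by
      rw [pow_succ]; field_simp
    rw [ih, h2, hausdorffMeasure_arc_two_mul (by positivity) h1, pow_succ (2 : ENNReal), mul_assoc]

lemma hausdorffMeasure_circle :
    (μH[1] : Measure ℂ) (sphere 0 1) = ENNReal.ofReal (2 * Real.pi) := by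
  have him : circleMap 0 1 '' Ioc 0 (2 * Real.pi) = sphere 0 1 := by
    simp
  rw [← him]
  apply le_antisymm
  · have := (lipschitzWith_circleMap 0 1).hausdorffMeasure_image_le (d := 1) zero_le_one
      (Ioc 0 (2 * Real.pi))
    rw [hausdorffMeasure_real] at this
    simpa using this
  · have hlim : Tendsto (fun n : ℕ => 2 * Real.pi * Real.sinc (2 * Real.pi / 2 ^ n)) atTop
        (𝓝 (2 * Real.pi)) := by
      have h0 : Tendsto (fun n : ℕ => 2 * Real.pi / (2 : ℝ) ^ n) atTop (𝓝 0) :=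
        tendsto_const_nhds.div_atTop (tendsto_pow_atTop_atTop_of_one_lt one_lt_two)
      simpa using ((Real.continuous_sinc.tendsto 0).comp h0).const_mul (2 * Real.pi)
    refine le_of_tendsto' ((ENNReal.continuous_ofReal.tendsto _).comp hlim) fun n => ?_
    have hpos := Real.pi_pos
    have h1 : 2 * Real.pi * Real.sinc (2 * Real.pi / 2 ^ n)
        = 2 ^ n * Real.sin (2 * Real.pi / 2 ^ n) := by
      rw [Real.sinc_of_ne_zero (by positivity)]
      field_simp
    rw [hausdorffMeasure_arc_two_pi n, Function.comp_apply, h1,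
      ENNReal.ofReal_mul (by positivity), ENNReal.ofReal_pow (by norm_num), ENNReal.ofReal_ofNat]
    gcongr
    exact ofReal_sin_le_hausdorffMeasure_arc (by positivity)

lemma hausdorffMeasure_sphere :
    (μH[1] : Measure (EuclideanSpace ℝ (Fin 2))) (sphere 0 1) = ENNReal.ofReal (2 * Real.pi) := by
  have e := Complex.orthonormalBasisOneI.repr
  have : sphere (0 : EuclideanSpace ℝ (Fin 2)) 1 = e.toIsometryEquiv '' sphere 0 1 := by
    simp
  rw [this, IsometryEquiv.hausdorffMeasure_image, hausdorffMeasure_circle]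

lemma integrableOn_sphere {f : EuclideanSpace ℝ (Fin 2) → ℝ} (hf : Continuous f) :
    IntegrableOn f (sphere 0 1) μH[1] :=
  hf.continuousOn.integrableOn_of_subset_isCompact (isCompact_sphere 0 1)
    isClosed_sphere.measurableSet subset_rfl
    (by rw [hausdorffMeasure_sphere]; exact ENNReal.ofReal_ne_top)

/-- Averaging with the quarter turn `J` reduces this to `⟪a, v⟫² + ⟪a, J v⟫² = ‖a‖²` on the unit
circle: the mean of `⟪a, v⟫²` over the unit circle is `‖a‖² / 2`. -/
lemma setIntegral_inner_sq (a : EuclideanSpace ℝ (Fin 2)) :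
    ∫ v in sphere (0 : EuclideanSpace ℝ (Fin 2)) 1, ⟪a, v⟫ ^ 2 ∂μH[1] = Real.pi * ‖a‖ ^ 2 := by
  have : Fact (Module.finrank ℝ (EuclideanSpace ℝ (Fin 2)) = 2) := ⟨by simp⟩
  let o := (EuclideanSpace.basisFun (Fin 2) ℝ).toBasis.orientation
  let J := o.rightAngleRotation
  have hJ : ∫ v in sphere (0 : EuclideanSpace ℝ (Fin 2)) 1, ⟪a, v⟫ ^ 2 ∂μH[1] =
      ∫ v in sphere (0 : EuclideanSpace ℝ (Fin 2)) 1, ⟪a, J v⟫ ^ 2 ∂μH[1] := by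
    have := (J.toIsometryEquiv.measurePreserving_hausdorffMeasure 1).setIntegral_preimage_emb
      J.toIsometryEquiv.toHomeomorph.measurableEmbedding (fun v => ⟪a, v⟫ ^ 2) (sphere 0 1)
    rw [← this]
    simp
  have hsum : (∫ v in sphere (0 : EuclideanSpace ℝ (Fin 2)) 1, ⟪a, v⟫ ^ 2 ∂μH[1]) +
      ∫ v in sphere (0 : EuclideanSpace ℝ (Fin 2)) 1, ⟪a, J v⟫ ^ 2 ∂μH[1] =
      2 * Real.pi * ‖a‖ ^ 2 := by
    rw [← integral_add (integrableOn_sphere (by fun_prop)) (integrableOn_sphere (by fun_prop)),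
      setIntegral_congr_fun (g := fun _ => ‖a‖ ^ 2) isClosed_sphere.measurableSet]
    · have hpos := Real.pi_pos
      simp [measureReal_def, hausdorffMeasure_sphere, hpos.le]
    · intro v hv
      have h1 : ‖v‖ = 1 := by simpa using hv
      have := o.inner_sq_add_areaForm_sq a v
      simpa [J, o.inner_rightAngleRotation_right, h1] using this
  linarith

/-- A seminorm on a Euclidean plane is supported at each nonzero point by a linear functional, which
is represented here by a vector through the inner product. -/
lemma exists_inner_le_seminorm (s : Seminorm ℝ (EuclideanSpace ℝ (Fin 2)))
    {v₀ : EuclideanSpace ℝ (Fin 2)} (hv₀ : v₀ ≠ 0) :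
    ∃ a : EuclideanSpace ℝ (Fin 2), ⟪a, v₀⟫ = s v₀ ∧ ∀ v, |⟪a, v⟫| ≤ s v := by
  obtain ⟨g, hg, hgs⟩ := Module.Dual.exists_extension_of_le_seminorm_real
    (Submodule.span ℝ {v₀}) (s v₀ • (LinearEquiv.coord ℝ _ v₀ hv₀).toLinearMap) (p := s) (by
      intro x
      conv_rhs => rw [← LinearEquiv.coord_apply_smul ℝ _ v₀ hv₀ x, map_smul_eq_mul]
      rw [mul_comm]
      simpa using mul_le_mul_of_nonneg_left (le_abs_self _) (apply_nonneg s v₀))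
  have hin : ∀ v, ⟪(InnerProductSpace.toDual ℝ _).symm (LinearMap.toContinuousLinearMap g), v⟫
      = g v := fun v => by simp
  refine ⟨(InnerProductSpace.toDual ℝ _).symm (LinearMap.toContinuousLinearMap g), ?_, ?_⟩
  · rw [hin, hg ⟨v₀, Submodule.mem_span_singleton_self v₀⟩]
    simp [LinearEquiv.coord_self]
  · intro v
    rw [hin]
    exact hgs v

lemma continuous_seminorm (s : Seminorm ℝ (EuclideanSpace ℝ (Fin 2))) : Continuous s := by
  have := s.convexOn.continuousOn isOpen_univ
  rwa [continuousOn_univ] at this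

lemma Iavg_two_two (s : Seminorm ℝ (EuclideanSpace ℝ (Fin 2))) :
    Iavg 2 2 s = Real.pi⁻¹ * ∫ v in sphere (0 : EuclideanSpace ℝ (Fin 2)) 1, s v ^ 2 ∂μH[1] := by
  have h1 : ((2 : ℕ) : ℝ) - 1 = 1 := by norm_num
  simp only [Iavg, h1, Real.rpow_two, EuclideanSpace.volume_ball_fin_two]
  simp [Real.pi_pos.le]

theorem Iplus_Iavg_comparison_dim_two (s : Seminorm ℝ (EuclideanSpace ℝ (Fin 2))) :
    (1 / 2 : ℝ) * Iavg 2 2 s ≤ Iplus 2 2 s ∧ Iplus 2 2 s ≤ Iavg 2 2 s := by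
  have hpos := Real.pi_pos
  have hc := continuous_seminorm s
  have hint : IntegrableOn (fun v => s v ^ 2) (sphere (0 : EuclideanSpace ℝ (Fin 2)) 1) μH[1] :=
    integrableOn_sphere (by fun_prop)
  rw [Iavg_two_two]
  simp only [Iplus, Real.rpow_two]
  constructor
  · have hbdd : BddAbove (range fun v : sphere (0 : EuclideanSpace ℝ (Fin 2)) 1 => s v.1 ^ 2) :=
      (isCompact_range (by fun_prop)).bddAbove
    set M := ⨆ v : sphere (0 : EuclideanSpace ℝ (Fin 2)) 1, s v.1 ^ 2 with hM
    have hle : ∫ v in sphere (0 : EuclideanSpace ℝ (Fin 2)) 1, s v ^ 2 ∂μH[1] ≤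
        ∫ v in sphere (0 : EuclideanSpace ℝ (Fin 2)) 1, M ∂μH[1] :=
      setIntegral_mono_on hint (integrableOn_sphere continuous_const)
        isClosed_sphere.measurableSet fun v hv => le_ciSup hbdd ⟨v, hv⟩
    have hconst : ∫ v in sphere (0 : EuclideanSpace ℝ (Fin 2)) 1, M ∂μH[1] =
        2 * Real.pi * M := by
      simp [measureReal_def, hausdorffMeasure_sphere, hpos.le]
    rw [hconst] at hle
    calc _ ≤ 1 / 2 * (Real.pi⁻¹ * (2 * Real.pi * M)) := by gcongr
      _ = M := by field_simp
  · have : Nonempty (sphere (0 : EuclideanSpace ℝ (Fin 2)) 1) :=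
      (NormedSpace.sphere_nonempty.2 zero_le_one).to_subtype
    refine ciSup_le fun ⟨v₀, hv₀⟩ => ?_
    have hn : ‖v₀‖ = 1 := by simpa using hv₀
    obtain ⟨a, ha, has⟩ := exists_inner_le_seminorm s (v₀ := v₀) (norm_ne_zero_iff.1 (by simp [hn]))
    have hnorm : s v₀ ≤ ‖a‖ := by
      simpa [ha, hn] using real_inner_le_norm a v₀
    have hle : Real.pi * ‖a‖ ^ 2 ≤
        ∫ v in sphere (0 : EuclideanSpace ℝ (Fin 2)) 1, s v ^ 2 ∂μH[1] := by
      rw [← setIntegral_inner_sq]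
      refine setIntegral_mono (integrableOn_sphere (by fun_prop)) hint fun v => ?_
      exact sq_le_sq' (abs_le.1 (has v)).1 (abs_le.1 (has v)).2
    calc s v₀ ^ 2 ≤ ‖a‖ ^ 2 := by gcongr
      _ = Real.pi⁻¹ * (Real.pi * ‖a‖ ^ 2) := by field_simp
      _ ≤ _ := by gcongr
end

section
/- Let s be a seminorm on ℝ² such that 𝓘²_avg(s) ≤ 𝓘²_avg(s ∘ T) for every T ∈ SL₂(ℝ). Then s is Q-quasi-conformal with Q = 2√2 + √6. Moreover, if s is induced by a positive-semidefinite symmetric bilinear form (s(v) = √(b(v,v))), then s is conformal. -/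
/-!
The hypothesis is only used for the diagonal maps `T v = t x u + t⁻¹ y w`, where `(u, w)` is an
orthonormal basis, `v = x u + y w`, and `t > 0` (`integral_le_integral_stretch`); no first
variation of the functional is needed.

Write `a = s u` and `m = s w`, and let `K` be the integral of `x²` over the circle, which is also
that of `y²`. The triangle inequality gives `s v ≥ |a|x| - m|y||` and `s (T v) ≤ t a|x| + t⁻¹ m|y|`.
A rotation by 45° shows that the integral of `|xy|` is at most `3K/4` (`integral_abs_mul_le`).
For `t = 1/2`, squaring and integrating give `a² ≤ 4am + 4m²` (`orthogonal_bound`),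
so `a ≤ (2 + 2√2) m`, and then `(s v)² ≤ a² + m² ≤ (13 + 8√2) m² ≤ (2√2 + √6)² m²` for every unit
vector `v` (`quasiconformal_of_orthogonal_bound`).

If `s² = b` is a quadratic form, the integrals can be computed exactly, because the integral of `xy`
vanishes: `b(u,u) + b(w,w) ≤ t² b(u,u) + t⁻² b(w,w)` for all `t > 0`. Letting `t → 1⁻` gives
`b(u,u) ≤ b(w,w)` (`bilin_le`), hence equality for all orthonormal pairs. Applied to the pair
rotated by 45°, this equality says `b(u,w) = 0`, so `b` is a multiple of the inner product.

On the Hausdorff measure of the circle, the argument uses only that it is finite, nonzero and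
invariant under rotations.
-/

open MeasureTheory Metric

/-- The Euclidean plane. -/
abbrev Plane := EuclideanSpace ℝ (Fin 2)

/-- The one-dimensional Hausdorff measure on the unit circle, as a measure on the plane. -/
noncomputable def circleMeasure : Measure Plane :=
  (μH[1] : Measure Plane).restrict (sphere 0 1)

lemma norm_eq_one_iff_coord (v : Plane) : ‖v‖ = 1 ↔ v 0 ^ 2 + v 1 ^ 2 = 1 := by
  rw [EuclideanSpace.norm_eq, Real.sqrt_eq_one]
  simp [Fin.sum_univ_two]

/-! ### The measure on the circle -/

/-- The circle is a Lipschitz image of a bounded interval, so its length is finite. -/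
lemma hausdorff_circle_lt_top : (μH[1] : Measure Plane) (sphere 0 1) < ⊤ := by
  let γ : ℝ → Plane := fun θ => !₂[Real.cos θ, Real.sin θ]
  have hγ : ContDiff ℝ 1 γ := by
    rw [contDiff_euclidean]
    intro i
    fin_cases i
    · exact Real.contDiff_cos
    · exact Real.contDiff_sin
  obtain ⟨C, hC⟩ : ∃ C, LipschitzOnWith C γ (Set.Icc (-Real.pi) Real.pi) :=
    hγ.contDiffOn.exists_lipschitzOnWith one_ne_zero (convex_Icc _ _) isCompact_Icc
  have hsub : sphere (0 : Plane) 1 ⊆ γ '' Set.Icc (-Real.pi) Real.pi := by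
    intro v hv
    rw [mem_sphere_zero_iff_norm, norm_eq_one_iff_coord] at hv
    have hz : ‖(⟨v 0, v 1⟩ : ℂ)‖ = 1 := by
      rw [Complex.norm_def, Real.sqrt_eq_one, Complex.normSq_mk]
      linarith
    have hz0 : (⟨v 0, v 1⟩ : ℂ) ≠ 0 := by
      intro h0
      simp [h0] at hz
    refine ⟨Complex.arg ⟨v 0, v 1⟩,
      ⟨(Complex.neg_pi_lt_arg _).le, Complex.arg_le_pi _⟩, ?_⟩
    ext i
    fin_cases i
    · simp [γ, Complex.cos_arg hz0, hz]
    · simp [γ, Complex.sin_arg, hz]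
  calc (μH[1] : Measure Plane) (sphere 0 1)
      ≤ μH[1] (γ '' Set.Icc (-Real.pi) Real.pi) := measure_mono hsub
    _ ≤ (C : ENNReal) ^ (1 : ℝ) * μH[1] (Set.Icc (-Real.pi) Real.pi) :=
        hC.hausdorffMeasure_image_le zero_le_one
    _ < ⊤ := by
        rw [hausdorffMeasure_real, Real.volume_Icc, ENNReal.rpow_one]
        exact ENNReal.mul_lt_top ENNReal.coe_lt_top ENNReal.ofReal_lt_top

/-- The first coordinate maps the circle onto `[-1, 1]` and is `1`-Lipschitz, so the length of the
circle is positive. -/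
lemma hausdorff_circle_pos : 0 < (μH[1] : Measure Plane) (sphere 0 1) := by
  have hL : LipschitzWith 1 (fun v : Plane => v 0) :=
    LipschitzWith.of_dist_le_mul fun v w => by
      simpa [dist_eq_norm] using PiLp.norm_apply_le (v - w) 0
  have hsub : Set.Icc (-1 : ℝ) 1 ⊆ (fun v : Plane => v 0) '' sphere 0 1 := by
    intro x hx
    refine ⟨!₂[x, Real.sqrt (1 - x ^ 2)], ?_, by simp⟩
    rw [mem_sphere_zero_iff_norm, norm_eq_one_iff_coord]
    have : 0 ≤ 1 - x ^ 2 := by nlinarith [hx.1, hx.2]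
    simp [Real.sq_sqrt this]
  have h1 := hL.hausdorffMeasure_image_le zero_le_one (sphere (0 : Plane) 1)
  have h2 : (0 : ENNReal) < μH[1] (Set.Icc (-1 : ℝ) 1) := by
    rw [hausdorffMeasure_real, Real.volume_Icc]
    norm_num
  have h3 := h2.trans_le ((measure_mono hsub).trans h1)
  simpa using h3

instance : IsFiniteMeasure circleMeasure :=
  ⟨by simpa [circleMeasure] using hausdorff_circle_lt_top⟩

lemma circleMeasure_real_pos : 0 < circleMeasure.real Set.univ := by
  rw [Measure.real, ENNReal.toReal_pos_iff]
  simpa [circleMeasure] using ⟨hausdorff_circle_pos, hausdorff_circle_lt_top⟩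

lemma ae_circleMeasure : ∀ᵐ v ∂circleMeasure, v 0 ^ 2 + v 1 ^ 2 = 1 := by
  filter_upwards [ae_restrict_mem (μ := (μH[1] : Measure Plane))
    (isClosed_sphere (x := (0 : Plane)) (ε := 1)).measurableSet] with v hv
  rwa [mem_sphere_zero_iff_norm, norm_eq_one_iff_coord] at hv

lemma Continuous.integrable_circleMeasure {f : Plane → ℝ} (hf : Continuous f) :
    Integrable f circleMeasure := by
  obtain ⟨C, hC⟩ := (isCompact_sphere (0 : Plane) 1).exists_bound_of_continuousOn hf.continuousOn
  refine Integrable.of_bound hf.aestronglyMeasurable C ?_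
  filter_upwards [ae_circleMeasure] with v hv
  exact hC v (by rwa [mem_sphere_zero_iff_norm, norm_eq_one_iff_coord])

/-- Rotation invariance: `(c, d)` is the cosine and sine of the angle. -/
lemma integral_rotation (f : ℝ → ℝ → ℝ) {c d : ℝ} (h : c ^ 2 + d ^ 2 = 1) :
    ∫ v, f (d * v 0 - c * v 1) (c * v 0 + d * v 1) ∂circleMeasure =
      ∫ v, f (v 0) (v 1) ∂circleMeasure := by
  let L : Plane →ₗ[ℝ] Plane := Matrix.toLpLin 2 2 !![d, -c; c, d]
  have hL0 (v : Plane) : L v 0 = d * v 0 - c * v 1 := by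
    simp [L, Matrix.toLpLin_apply, dotProduct, Fin.sum_univ_two]; ring
  have hL1 (v : Plane) : L v 1 = c * v 0 + d * v 1 := by
    simp [L, Matrix.toLpLin_apply, dotProduct, Fin.sum_univ_two]
  have hnorm (v : Plane) : ‖L v‖ = ‖v‖ := by
    simp only [EuclideanSpace.norm_eq, Fin.sum_univ_two, Real.norm_eq_abs, sq_abs, hL0, hL1]
    congr 1
    linear_combination (v 0 ^ 2 + v 1 ^ 2) * h
  let e : Plane ≃ₗᵢ[ℝ] Plane :=
    LinearIsometry.toLinearIsometryEquiv ⟨L, hnorm⟩ rfl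
  have he (v : Plane) : e v = L v := rfl
  have hmp := e.toIsometryEquiv.measurePreserving_hausdorffMeasure 1
  have hkey := hmp.setIntegral_preimage_emb
    e.toIsometryEquiv.toHomeomorph.measurableEmbedding (fun v => f (v 0) (v 1)) (sphere 0 1)
  have hpre : e.toIsometryEquiv ⁻¹' sphere (0 : Plane) 1 = sphere 0 1 := by
    ext v
    simp
  rw [hpre] at hkey
  simp only [LinearIsometryEquiv.coe_toIsometryEquiv, he, hL0, hL1] at hkey
  exact hkey

/-! ### Quadratic moments of the circle -/

/-- The second moment of the first coordinate on the circle. -/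
noncomputable def circleMoment : ℝ := ∫ v, v 0 ^ 2 ∂circleMeasure

lemma integral_snd_sq : ∫ v, v 1 ^ 2 ∂circleMeasure = circleMoment := by
  have := integral_rotation (fun x _ => x ^ 2) (c := 1) (d := 0) (by norm_num)
  simpa [circleMoment] using this

lemma integral_fst_mul_snd : ∫ v, v 0 * v 1 ∂circleMeasure = 0 := by
  have := integral_rotation (fun x y => x * y) (c := 1) (d := 0) (by norm_num)
  simp only [zero_mul, one_mul, zero_sub, add_zero, neg_mul, integral_neg,
    fun v : Plane => mul_comm (v 1) (v 0)] at this
  linarith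

lemma circleMeasure_real_univ : circleMeasure.real Set.univ = 2 * circleMoment := by
  have h1 : ∫ v, (v 0 ^ 2 + v 1 ^ 2) ∂circleMeasure = ∫ _, (1 : ℝ) ∂circleMeasure :=
    integral_congr_ae ae_circleMeasure
  rw [integral_add (Continuous.integrable_circleMeasure (by fun_prop))
    (Continuous.integrable_circleMeasure (by fun_prop)), integral_snd_sq] at h1
  simp only [integral_const, smul_eq_mul, mul_one] at h1
  rw [← h1, circleMoment]
  ring

lemma circleMoment_pos : 0 < circleMoment := by
  have := circleMeasure_real_pos
  rw [circleMeasure_real_univ] at this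
  linarith

/-- The sharp constant is `2 / π`. The rotation by 45° turns `|xy|` into `|x² - y²| / 2`, and the
sum of these two functions is at most `√2 / 2 ≤ 3 / 4` on the circle. -/
lemma integral_abs_fst_mul_snd_le :
    ∫ v, |v 0 * v 1| ∂circleMeasure ≤ 3 / 4 * circleMoment := by
  have hs : (Real.sqrt 2 / 2) ^ 2 = 1 / 2 := by
    rw [div_pow, Real.sq_sqrt (by norm_num)]; norm_num
  have hrot := integral_rotation (fun x y => |x * y|) (c := Real.sqrt 2 / 2)
    (d := Real.sqrt 2 / 2) (by rw [hs]; norm_num)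
  have hpt (v : Plane) : (Real.sqrt 2 / 2 * v 0 - Real.sqrt 2 / 2 * v 1) *
      (Real.sqrt 2 / 2 * v 0 + Real.sqrt 2 / 2 * v 1) = (v 0 ^ 2 - v 1 ^ 2) / 2 := by
    linear_combination (v 0 ^ 2 - v 1 ^ 2) * hs
  simp only [hpt] at hrot
  have hle : ∫ v, (|v 0 * v 1| + |(v 0 ^ 2 - v 1 ^ 2) / 2|) ∂circleMeasure ≤
      ∫ _, (3 / 4 : ℝ) ∂circleMeasure := by
    refine integral_mono_ae (Continuous.integrable_circleMeasure (by fun_prop))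
      (integrable_const _) ?_
    filter_upwards [ae_circleMeasure] with v hv
    refine le_of_abs_le (abs_le_of_sq_le_sq ?_ (by norm_num))
    have h1 : |v 0 * v 1| ^ 2 + |(v 0 ^ 2 - v 1 ^ 2) / 2| ^ 2 = 1 / 4 := by
      rw [sq_abs, sq_abs]
      linear_combination (v 0 ^ 2 + v 1 ^ 2 + 1) / 4 * hv
    nlinarith [sq_nonneg (|v 0 * v 1| - |(v 0 ^ 2 - v 1 ^ 2) / 2|)]
  rw [integral_add (Continuous.integrable_circleMeasure (by fun_prop))
    (Continuous.integrable_circleMeasure (by fun_prop)), hrot, integral_const,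
    circleMeasure_real_univ, smul_eq_mul] at hle
  linarith

/-! ### Coordinates in an orthonormal basis -/

/-- The vector `w` rotated by `-90°`. -/
noncomputable def perp (w : Plane) : Plane := !₂[w 1, -w 0]

/-- The coordinate of `v` along `perp w`, when `w` is a unit vector. -/
noncomputable def perpCoord (w v : Plane) : ℝ := w 1 * v 0 - w 0 * v 1

/-- The coordinate of `v` along `w`, when `w` is a unit vector. -/
noncomputable def coordAlong (w v : Plane) : ℝ := w 0 * v 0 + w 1 * v 1

@[fun_prop]
lemma continuous_perpCoord (w : Plane) : Continuous (perpCoord w) := by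
  unfold perpCoord; fun_prop

@[fun_prop]
lemma continuous_coordAlong (w : Plane) : Continuous (coordAlong w) := by
  unfold coordAlong; fun_prop

lemma norm_perp {w : Plane} (hw : ‖w‖ = 1) : ‖perp w‖ = 1 := by
  rw [norm_eq_one_iff_coord] at *
  simp [perp]; linarith

lemma coord_decomp {w : Plane} (hw : ‖w‖ = 1) (v : Plane) :
    v = perpCoord w v • perp w + coordAlong w v • w := by
  rw [norm_eq_one_iff_coord] at hw
  ext i
  fin_cases i
  · simp [perp, perpCoord, coordAlong]
    linear_combination (-v 0) * hw
  · simp [perp, perpCoord, coordAlong]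
    linear_combination (-v 1) * hw

lemma coord_sq_add_sq {w v : Plane} (hw : ‖w‖ = 1) (hv : ‖v‖ = 1) :
    perpCoord w v ^ 2 + coordAlong w v ^ 2 = 1 := by
  rw [norm_eq_one_iff_coord] at *
  simp only [perpCoord, coordAlong]
  linear_combination (v 0 ^ 2 + v 1 ^ 2) * hw + hv

lemma integral_perpCoord_sq {w : Plane} (hw : ‖w‖ = 1) :
    ∫ v, perpCoord w v ^ 2 ∂circleMeasure = circleMoment :=
  integral_rotation (fun x _ => x ^ 2) ((norm_eq_one_iff_coord w).1 hw)

lemma integral_coordAlong_sq {w : Plane} (hw : ‖w‖ = 1) :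
    ∫ v, coordAlong w v ^ 2 ∂circleMeasure = circleMoment :=
  (integral_rotation (fun _ y => y ^ 2) ((norm_eq_one_iff_coord w).1 hw)).trans integral_snd_sq

lemma integral_mul_eq_zero {w : Plane} (hw : ‖w‖ = 1) :
    ∫ v, perpCoord w v * coordAlong w v ∂circleMeasure = 0 :=
  (integral_rotation (fun x y => x * y) ((norm_eq_one_iff_coord w).1 hw)).trans
    integral_fst_mul_snd

lemma integral_abs_mul_le {w : Plane} (hw : ‖w‖ = 1) :
    ∫ v, |perpCoord w v * coordAlong w v| ∂circleMeasure ≤ 3 / 4 * circleMoment :=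
  (integral_rotation (fun x y => |x * y|) ((norm_eq_one_iff_coord w).1 hw)).trans_le
    integral_abs_fst_mul_snd_le

/-- Used with `g = |·|` for estimates and with `g = id` for quadratic forms. -/
lemma integral_quadratic {w : Plane} (hw : ‖w‖ = 1) (A B C : ℝ) (g : ℝ → ℝ) (hg : Continuous g) :
    ∫ v, (A * perpCoord w v ^ 2 + B * g (perpCoord w v * coordAlong w v) + C * coordAlong w v ^ 2)
      ∂circleMeasure = (A + C) * circleMoment +
        B * ∫ v, g (perpCoord w v * coordAlong w v) ∂circleMeasure := by
  rw [integral_add (Continuous.integrable_circleMeasure (by fun_prop))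
    (Continuous.integrable_circleMeasure (by fun_prop)),
    integral_add (Continuous.integrable_circleMeasure (by fun_prop))
    (Continuous.integrable_circleMeasure (by fun_prop)), integral_const_mul, integral_const_mul,
    integral_const_mul, integral_perpCoord_sq hw, integral_coordAlong_sq hw]
  ring

/-! ### Minimality along diagonal maps -/

lemma Seminorm.continuous_plane (s : Seminorm ℝ Plane) : Continuous s :=
  continuousOn_univ.1 (s.convexOn.continuousOn isOpen_univ)

lemma Iavg_eq (s : Seminorm ℝ Plane) :
    Iavg 2 2 s = (volume (ball (0 : Plane) 1)).toReal⁻¹ * ∫ v, s v ^ 2 ∂circleMeasure := by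
  have h1 : (((2 : ℕ) : ℝ) - 1) = 1 := by norm_num
  simp only [Iavg, circleMeasure, h1, Real.rpow_two]

/-- Every map that is diagonal in the basis `perp w`, `w`, with entries `t` and `t⁻¹`, is a
competitor in the minimisation. -/
lemma integral_le_integral_stretch {s : Seminorm ℝ Plane}
    (h : ∀ T : Plane →ₗ[ℝ] Plane, LinearMap.det T = 1 → Iavg 2 2 s ≤ Iavg 2 2 (s.comp T))
    {w : Plane} (hw : ‖w‖ = 1) {t : ℝ} (ht : 0 < t) :
    ∫ v, s v ^ 2 ∂circleMeasure ≤
      ∫ v, s ((t * perpCoord w v) • perp w + (t⁻¹ * coordAlong w v) • w) ^ 2 ∂circleMeasure := by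
  let M : Matrix (Fin 2) (Fin 2) ℝ :=
    !![t * w 1 ^ 2 + t⁻¹ * w 0 ^ 2, (t⁻¹ - t) * (w 0 * w 1);
      (t⁻¹ - t) * (w 0 * w 1), t * w 0 ^ 2 + t⁻¹ * w 1 ^ 2]
  have hw' := (norm_eq_one_iff_coord w).1 hw
  have hdet : LinearMap.det (Matrix.toLpLin 2 2 M) = 1 := by
    rw [LinearMap.det_toLpLin, Matrix.det_fin_two]
    simp only [M, Matrix.of_apply, Matrix.cons_val', Matrix.cons_val_zero, Matrix.cons_val_one,
      Matrix.cons_val_fin_one]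
    have htt : t * t⁻¹ = 1 := mul_inv_cancel₀ ht.ne'
    linear_combination (w 0 ^ 2 + w 1 ^ 2) ^ 2 * htt + (w 0 ^ 2 + w 1 ^ 2 + 1) * hw'
  have hT (v : Plane) : Matrix.toLpLin 2 2 M v =
      (t * perpCoord w v) • perp w + (t⁻¹ * coordAlong w v) • w := by
    ext i
    fin_cases i
    · simp [M, Matrix.toLpLin_apply, dotProduct, Fin.sum_univ_two, perp, perpCoord,
        coordAlong]
      ring
    · simp [M, Matrix.toLpLin_apply, dotProduct, Fin.sum_univ_two, perp, perpCoord,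
        coordAlong]
      ring
  have hvol : 0 < (volume (ball (0 : Plane) 1)).toReal :=
    ENNReal.toReal_pos (measure_ball_pos _ _ one_pos).ne' measure_ball_lt_top.ne
  have hmin := h _ hdet
  rw [Iavg_eq, Iavg_eq] at hmin
  simpa only [Seminorm.comp_apply, hT] using le_of_mul_le_mul_left hmin (inv_pos.2 hvol)

lemma seminorm_smul_add_le (s : Seminorm ℝ Plane) (x y : ℝ) (u w : Plane) :
    s (x • u + y • w) ≤ |x| * s u + |y| * s w := by
  simpa [map_smul_eq_mul] using map_add_le_add s (x • u) (y • w)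

/-! ### Quasi-conformality -/

/-- The comparison with the map that halves the coordinate along `perp w` and doubles the one
along `w`. -/
lemma orthogonal_bound {s : Seminorm ℝ Plane}
    (h : ∀ T : Plane →ₗ[ℝ] Plane, LinearMap.det T = 1 → Iavg 2 2 s ≤ Iavg 2 2 (s.comp T))
    {w : Plane} (hw : ‖w‖ = 1) :
    s (perp w) ^ 2 ≤ 4 * (s (perp w) * s w) + 4 * s w ^ 2 := by
  have hmin := integral_le_integral_stretch h hw (t := 1 / 2) (by norm_num)
  set a := s (perp w)
  set m := s w
  have ha : 0 ≤ a := apply_nonneg s _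
  have hm : 0 ≤ m := apply_nonneg s _
  have hscont := s.continuous_plane
  have hlow : ∫ v, (a ^ 2 * perpCoord w v ^ 2 + (-(2 * a * m)) *
      |perpCoord w v * coordAlong w v| + m ^ 2 * coordAlong w v ^ 2) ∂circleMeasure ≤
      ∫ v, s v ^ 2 ∂circleMeasure := by
    refine integral_mono (Continuous.integrable_circleMeasure (by fun_prop))
      (Continuous.integrable_circleMeasure (by fun_prop)) fun v => ?_
    have hrev := abs_sub_map_le_sub s (perpCoord w v • perp w) (-(coordAlong w v • w))
    rw [sub_neg_eq_add, ← coord_decomp hw v, map_neg_eq_map, map_smul_eq_mul, map_smul_eq_mul,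
      Real.norm_eq_abs, Real.norm_eq_abs] at hrev
    have hsq := pow_le_pow_left₀ (abs_nonneg _) hrev 2
    rw [sq_abs] at hsq
    simp only [abs_mul]
    calc _ = (|perpCoord w v| * s (perp w) - |coordAlong w v| * s w) ^ 2 := by
          rw [← sq_abs (perpCoord w v), ← sq_abs (coordAlong w v)]; ring
      _ ≤ _ := hsq
  have hupp : ∫ v, s ((1 / 2 * perpCoord w v) • perp w + ((1 / 2)⁻¹ * coordAlong w v) • w) ^ 2
      ∂circleMeasure ≤ ∫ v, (a ^ 2 / 4 * perpCoord w v ^ 2 + 2 * a * m *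
      |perpCoord w v * coordAlong w v| + 4 * m ^ 2 * coordAlong w v ^ 2) ∂circleMeasure := by
    refine integral_mono (Continuous.integrable_circleMeasure (by fun_prop))
      (Continuous.integrable_circleMeasure (by fun_prop)) fun v => ?_
    have hle : s ((1 / 2 * perpCoord w v) • perp w + ((1 / 2)⁻¹ * coordAlong w v) • w) ≤
        1 / 2 * |perpCoord w v| * a + 2 * |coordAlong w v| * m := by
      refine (seminorm_smul_add_le s _ _ _ _).trans_eq ?_
      rw [abs_mul, abs_mul, abs_of_pos (show (0 : ℝ) < 1 / 2 by norm_num),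
        abs_of_pos (show (0 : ℝ) < (1 / 2)⁻¹ by norm_num), one_div, inv_inv]
    refine (pow_le_pow_left₀ (apply_nonneg s _) hle 2).trans_eq ?_
    rw [abs_mul]
    linear_combination a ^ 2 / 4 * sq_abs (perpCoord w v) + 4 * m ^ 2 * sq_abs (coordAlong w v)
  have hall := hlow.trans (hmin.trans hupp)
  rw [integral_quadratic hw _ _ _ (fun x => |x|) continuous_abs,
    integral_quadratic hw _ _ _ (fun x => |x|) continuous_abs] at hall
  have hmul := mul_le_mul_of_nonneg_left (integral_abs_mul_le hw) (mul_nonneg ha hm)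
  refine le_of_mul_le_mul_right ?_ circleMoment_pos
  nlinarith

lemma quasiconformal_of_orthogonal_bound {s : Seminorm ℝ Plane} {v w : Plane} (hv : ‖v‖ = 1)
    (hw : ‖w‖ = 1) (hb : s (perp w) ^ 2 ≤ 4 * (s (perp w) * s w) + 4 * s w ^ 2) :
    s v ≤ (2 * Real.sqrt 2 + Real.sqrt 6) * s w := by
  have hv1 := seminorm_smul_add_le s (perpCoord w v) (coordAlong w v) (perp w) w
  rw [← coord_decomp hw v] at hv1
  have hxy := coord_sq_add_sq hw hv
  rw [← sq_abs (perpCoord w v), ← sq_abs (coordAlong w v)] at hxy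
  have ha : 0 ≤ s (perp w) := apply_nonneg s _
  have hm : 0 ≤ s w := apply_nonneg s _
  have hv0 : 0 ≤ s v := apply_nonneg s _
  generalize s (perp w) = a at *
  generalize s w = m at *
  generalize |perpCoord w v| = x at *
  generalize |coordAlong w v| = y at *
  have h2 : Real.sqrt 2 ^ 2 = 2 := Real.sq_sqrt (by norm_num)
  have h6 : Real.sqrt 6 ^ 2 = 6 := Real.sq_sqrt (by norm_num)
  have h2l : (1.4 : ℝ) ≤ Real.sqrt 2 := Real.le_sqrt_of_sq_le (by norm_num)
  have h6l : (2.4 : ℝ) ≤ Real.sqrt 6 := Real.le_sqrt_of_sq_le (by norm_num)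
  -- The bound on `a` is `(2 + 2√2) m`, rounded up.
  have ha5 : a ≤ 4.9 * m := by
    by_contra! hlt
    nlinarith [mul_nonneg ha hm]
  -- Cauchy–Schwarz, using `x² + y² = 1`.
  have hcs : s v ^ 2 ≤ a ^ 2 + m ^ 2 := by
    have := pow_le_pow_left₀ hv0 hv1 2
    nlinarith [sq_nonneg (x * m - y * a)]
  have hfin : s v ≤ 5.2 * m := by
    refine le_of_abs_le (abs_le_of_sq_le_sq ?_ (by positivity))
    nlinarith [mul_self_le_mul_self ha ha5]
  exact hfin.trans (mul_le_mul_of_nonneg_right (by linarith) hm)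

/-! ### Seminorms induced by a bilinear form -/

/-- The comparison with maps that shrink the direction `perp w`: they would decrease the integral if
`b` were larger on `perp w` than on `w`. -/
lemma bilin_le {s : Seminorm ℝ Plane}
    (h : ∀ T : Plane →ₗ[ℝ] Plane, LinearMap.det T = 1 → Iavg 2 2 s ≤ Iavg 2 2 (s.comp T))
    {b : LinearMap.BilinForm ℝ Plane} (hsymm : ∀ v w, b v w = b w v)
    (hnn : ∀ v, 0 ≤ b v v) (hs : ∀ v, s v ^ 2 = b v v) {w : Plane} (hw : ‖w‖ = 1) :
    b (perp w) (perp w) ≤ b w w := by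
  have hexp (x y : ℝ) : s (x • perp w + y • w) ^ 2 =
      x ^ 2 * b (perp w) (perp w) + 2 * (x * y) * b (perp w) w + y ^ 2 * b w w := by
    rw [hs]
    simp only [map_add, map_smul, LinearMap.add_apply, LinearMap.smul_apply, smul_eq_mul,
      hsymm w (perp w)]
    ring
  have hint {t r : ℝ} : ∫ v, s ((t * perpCoord w v) • perp w + (r * coordAlong w v) • w) ^ 2
      ∂circleMeasure = (t ^ 2 * b (perp w) (perp w) + r ^ 2 * b w w) * circleMoment := by
    have := integral_quadratic hw (t ^ 2 * b (perp w) (perp w)) (2 * t * r * b (perp w) w)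
      (r ^ 2 * b w w) (fun x => x) continuous_id
    rw [integral_mul_eq_zero hw, mul_zero, add_zero] at this
    rw [← this]
    refine integral_congr_ae (.of_forall fun v => ?_)
    simp only [hexp]
    ring
  have hlhs : ∫ v, s v ^ 2 ∂circleMeasure =
      (b (perp w) (perp w) + b w w) * circleMoment := by
    have := hint (t := 1) (r := 1)
    simpa only [one_mul, one_pow, ← coord_decomp hw] using this
  have hp := hnn (perp w)
  have hq := hnn w
  by_contra! hlt
  have hp0 := hq.trans_lt hlt
  set p := b (perp w) (perp w)
  set q := b w w
  -- Any `t² < 1` with `t² p > q` gives a contradiction; this one is the midpoint of `q / p` and `1`.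
  have hτ : 0 < (p + q) / (2 * p) := by positivity
  have hmin := integral_le_integral_stretch h hw (Real.sqrt_pos.2 hτ)
  rw [hlhs, hint, inv_pow, Real.sq_sqrt hτ.le, inv_div] at hmin
  have h1 := le_of_mul_le_mul_right hmin circleMoment_pos
  have h2 : (p + q) / (2 * p) * p = (p + q) / 2 := by field_simp
  rw [h2, div_mul_eq_mul_div, ← sub_le_iff_le_add', le_div_iff₀ (by positivity)] at h1
  nlinarith [mul_pos (sub_pos.2 hlt) (sub_pos.2 hlt)]

lemma bilin_perp_eq {s : Seminorm ℝ Plane}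
    (h : ∀ T : Plane →ₗ[ℝ] Plane, LinearMap.det T = 1 → Iavg 2 2 s ≤ Iavg 2 2 (s.comp T))
    {b : LinearMap.BilinForm ℝ Plane} (hsymm : ∀ v w, b v w = b w v)
    (hnn : ∀ v, 0 ≤ b v v) (hs : ∀ v, s v ^ 2 = b v v) {w : Plane} (hw : ‖w‖ = 1) :
    b (perp w) (perp w) = b w w := by
  refine le_antisymm (bilin_le h hsymm hnn hs hw) ?_
  have hpp : perp (perp w) = -w := by
    ext i
    fin_cases i <;> simp [perp]
  have := bilin_le h hsymm hnn hs (norm_perp hw)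
  simpa [hpp] using this

/-- Let `s` be a seminorm on `ℝ²` with `𝓘²_avg(s) ≤ 𝓘²_avg(s ∘ T)` for every
`T ∈ SL₂(ℝ)`. Then `s` is `(2√2 + √6)`-quasi-conformal. Moreover, if `s` is induced by a
positive-semidefinite symmetric bilinear form, then `s` is conformal. -/
theorem quasiconformal_of_Iavg_min (s : Seminorm ℝ (EuclideanSpace ℝ (Fin 2)))
    (h : ∀ T : EuclideanSpace ℝ (Fin 2) →ₗ[ℝ] EuclideanSpace ℝ (Fin 2),
      LinearMap.det T = 1 → Iavg 2 2 s ≤ Iavg 2 2 (s.comp T)) :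
    (∀ v w : EuclideanSpace ℝ (Fin 2), ‖v‖ = 1 → ‖w‖ = 1 →
      s v ≤ (2 * Real.sqrt 2 + Real.sqrt 6) * s w) ∧
    ((∃ b : LinearMap.BilinForm ℝ (EuclideanSpace ℝ (Fin 2)),
        (∀ v w : EuclideanSpace ℝ (Fin 2), b v w = b w v) ∧
        (∀ v : EuclideanSpace ℝ (Fin 2), 0 ≤ b v v) ∧
        (∀ v : EuclideanSpace ℝ (Fin 2), s v = Real.sqrt (b v v))) →
      ∀ v w : EuclideanSpace ℝ (Fin 2), ‖v‖ = 1 → ‖w‖ = 1 → s v = s w) := by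
  refine ⟨fun v w hv hw => quasiconformal_of_orthogonal_bound hv hw (orthogonal_bound h hw), ?_⟩
  rintro ⟨b, hsymm, hnn, hsb⟩ v w hv hw
  have hs (v : Plane) : s v ^ 2 = b v v := by rw [hsb, Real.sq_sqrt (hnn v)]
  have hperp := bilin_perp_eq h hsymm hnn hs hw
  -- Equality for the pair rotated by 45° makes `perp w` and `w` orthogonal for `b`.
  have hcross : b (perp w) w = 0 := by
    have h2 : Real.sqrt 2 / 2 * (Real.sqrt 2 / 2) = 1 / 2 := by
      linear_combination Real.mul_self_sqrt (show (0 : ℝ) ≤ 2 by norm_num) / 4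
    have hnorm : ‖(Real.sqrt 2 / 2) • (perp w + w)‖ = 1 := by
      rw [norm_eq_one_iff_coord] at *
      simp [perp]
      linear_combination 2 * (w 0 ^ 2 + w 1 ^ 2) * h2 + hw
    have hrot : perp ((Real.sqrt 2 / 2) • (perp w + w)) = (Real.sqrt 2 / 2) • (perp w - w) := by
      ext i
      fin_cases i <;> simp [perp] <;> ring
    have heq := bilin_perp_eq h hsymm hnn hs hnorm
    rw [hrot] at heq
    simp only [map_add, map_sub, map_smul, LinearMap.add_apply, LinearMap.sub_apply,
      LinearMap.smul_apply, smul_eq_mul, hsymm w (perp w)] at heq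
    linear_combination (-1 / 2) * heq - 2 * b (perp w) w * h2
  have hb : b v v = b w w := by
    have hxy := coord_sq_add_sq hw hv
    rw [coord_decomp hw v]
    simp only [map_add, map_smul, LinearMap.add_apply, LinearMap.smul_apply, smul_eq_mul,
      hsymm w (perp w), hcross, hperp]
    linear_combination b w w * hxy
  rw [hsb, hsb, hb]
end

section
/- Let n ≥ 1, p ≥ 1, let Y be a finite-dimensional real normed vector space with norm ‖·‖, let B be the closed Euclidean unit ball in ℝⁿ, let L : ℝⁿ → Y be a linear map, and let ψ : B → Y be a smooth map (C¹ on a neighborhood of B) with ψ(z) = L(z) for every z ∈ ∂B. Then ω_n·𝓘^p_avg(‖·‖ ∘ L) ≤ ∫_B 𝓘^p_avg(‖·‖ ∘ d_zψ) dL^n(z), i.e., the functional 𝓘^p_avg is quasi-convex. -/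
/-!
For a fixed direction `v`, the function `z ↦ d_zψ(v) - L v` has integral zero over the unit ball
`B`, because `ψ - L` vanishes on `∂B`. Choosing by Hahn–Banach a functional `ℓ` of norm at most one
with `ℓ (L v) = ‖L v‖ = a` and using the tangent line of `t ↦ t ^ p` at `a`, one gets
`‖d_zψ(v)‖ ^ p ≥ a ^ p + p * a ^ (p - 1) * (ℓ (d_zψ(v)) - a)`, and the last term integrates to zero
over `B`. Hence `ω_n * ‖L v‖ ^ p ≤ ∫_B ‖d_zψ(v)‖ ^ p dz` (`rpow_norm_le_integral`). The theorem
follows by integrating over `v` in the sphere and applying Fubini.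

The vanishing of the mean (`integral_fderiv_eq_zero`) needs no divergence theorem on the ball: the
extension by zero of a `C¹` function vanishing on the sphere is Lipschitz with compact support, so
integration by parts for Lipschitz functions against the constant `1` applies.

Fubini requires the Hausdorff measure `μH[n - 1]` of the sphere to be finite
(`hausdorffMeasure_sphere_lt_top`): the sphere is covered by the radial projections of the `2n`
faces of the cube `[-1, 1]ⁿ`, which are Lipschitz images of `[-1, 1]ⁿ⁻¹`, and on `ℝⁿ⁻¹` the measure
`μH[n - 1]` is Lebesgue measure.
-/

open MeasureTheory Metric

lemma exists_lipschitzOnWith_of_contDiffOn {E F : Type*} [NormedAddCommGroup E] [NormedSpace ℝ E]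
    [NormedAddCommGroup F] [NormedSpace ℝ F] {f : E → F} {U K : Set E} (hU : IsOpen U)
    (hKU : K ⊆ U) (hK : IsCompact K) (hc : Convex ℝ K) (hf : ContDiffOn ℝ 1 f U) :
    ∃ C, LipschitzOnWith C f K := by
  obtain ⟨C, hC⟩ := hK.exists_bound_of_continuousOn
    ((hf.continuousOn_fderiv_of_isOpen hU le_rfl).mono hKU)
  refine ⟨C.toNNReal, hc.lipschitzOnWith_of_nnnorm_fderiv_le (𝕜 := ℝ) (fun x hx =>
    (hf.differentiableOn one_ne_zero).differentiableAt (hU.mem_nhds (hKU hx))) fun x hx => ?_⟩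
  rw [← NNReal.coe_le_coe]
  exact (hC x hx).trans (Real.le_coe_toNNReal C)

/-! ### Finiteness of the Hausdorff measure of the sphere -/

/-- Radial projection to the unit sphere of the hyperplane `{x | x i = s}`, parametrized by the
other `m` coordinates `w`. On `closedBall 0 1`, a cube because `Fin m → ℝ` carries the sup norm, and
for `s = ±1`, this projects a face of the cube `[-1, 1] ^ (m + 1)`. -/
noncomputable def cubeFaceMap {m : ℕ} (i : Fin (m + 1)) (s : ℝ) (w : Fin m → ℝ) :
    EuclideanSpace ℝ (Fin (m + 1)) :=
  ‖(WithLp.toLp 2 (i.insertNth s w : Fin (m + 1) → ℝ) : EuclideanSpace ℝ (Fin (m + 1)))‖⁻¹ •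
    WithLp.toLp 2 (i.insertNth s w)

lemma contDiff_cubeFaceMap {m : ℕ} (i : Fin (m + 1)) {s : ℝ} (hs : s ≠ 0) :
    ContDiff ℝ 1 (cubeFaceMap i s) := by
  have h1 : ContDiff ℝ 1 (fun w : Fin m → ℝ =>
      (WithLp.toLp 2 (i.insertNth s w : Fin (m + 1) → ℝ) : EuclideanSpace ℝ (Fin (m + 1)))) := by
    rw [contDiff_piLp]
    intro j
    refine Fin.succAboveCases i ?_ (fun k => ?_) j
    · simpa using contDiff_const
    · simpa using contDiff_apply ℝ ℝ k
  have h0 : ∀ w : Fin m → ℝ,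
      (WithLp.toLp 2 (i.insertNth s w : Fin (m + 1) → ℝ) : EuclideanSpace ℝ (Fin (m + 1))) ≠ 0 := by
    intro w h
    have := congrArg (fun x : EuclideanSpace ℝ (Fin (m + 1)) => x i) h
    exact hs (by simpa using this)
  exact ((h1.norm ℝ h0).inv fun w => norm_ne_zero_iff.2 (h0 w)).smul h1

/-- The radial projections of the faces of the cube cover the sphere: a point `x` lies in the
projection of the face determined by a coordinate of maximal absolute value and its sign. -/
lemma sphere_subset_iUnion_cubeFaceMap (m : ℕ) :
    sphere (0 : EuclideanSpace ℝ (Fin (m + 1))) 1 ⊆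
      ⋃ i : Fin (m + 1),
        (cubeFaceMap i 1 '' closedBall 0 1 ∪ cubeFaceMap i (-1) '' closedBall 0 1) := by
  intro x hx
  have hx1 : ‖x‖ = 1 := by simpa using hx
  obtain ⟨i, -, hi⟩ := Finset.exists_max_image Finset.univ (fun i => |x i|) Finset.univ_nonempty
  have hpos : 0 < |x i| := by
    rw [abs_pos]
    intro h
    have : x = 0 := by
      ext j
      have := hi j (Finset.mem_univ j)
      simp only [h, abs_zero] at this
      simpa using this
    simp [this] at hx1
  have hmem : (fun k => |x i|⁻¹ * x (i.succAbove k)) ∈ closedBall (0 : Fin m → ℝ) 1 := by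
    rw [mem_closedBall_zero_iff, pi_norm_le_iff_of_nonneg zero_le_one]
    intro k
    rw [norm_mul, norm_inv, Real.norm_eq_abs, Real.norm_eq_abs, abs_abs, inv_mul_le_one₀ hpos]
    exact hi _ (Finset.mem_univ _)
  have key : ∀ s : ℝ, |x i|⁻¹ * x i = s →
      cubeFaceMap i s (fun k => |x i|⁻¹ * x (i.succAbove k)) = x := by
    intro s hs
    have : (WithLp.toLp 2 (i.insertNth s (fun k => |x i|⁻¹ * x (i.succAbove k)) :
        Fin (m + 1) → ℝ) : EuclideanSpace ℝ (Fin (m + 1))) = |x i|⁻¹ • x := by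
      ext j
      refine Fin.succAboveCases i ?_ (fun k => ?_) j
      · simp [hs]
      · simp
    rw [cubeFaceMap, this, norm_smul, hx1, smul_smul]
    simp [hpos.ne']
  rw [Set.mem_iUnion]
  refine ⟨i, ?_⟩
  rcases abs_choice (x i) with h | h
  · exact Or.inl ⟨_, hmem, key 1 (by rw [h] at hpos ⊢; exact inv_mul_cancel₀ hpos.ne')⟩
  · refine Or.inr ⟨_, hmem, key (-1) ?_⟩
    rw [h] at hpos ⊢
    have : x i ≠ 0 := by rintro h; simp [h] at hpos
    field_simp

lemma hausdorffMeasure_sphere_lt_top {n : ℕ} (hn : 1 ≤ n) :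
    μH[(n : ℝ) - 1] (sphere (0 : EuclideanSpace ℝ (Fin n)) 1) < ⊤ := by
  obtain ⟨m, rfl⟩ : ∃ m, n = m + 1 := ⟨n - 1, by omega⟩
  have hface : ∀ (i : Fin (m + 1)) (s : ℝ), s ≠ 0 →
      μH[(m : ℝ)] (cubeFaceMap i s '' closedBall 0 1) < ⊤ := by
    intro i s hs
    obtain ⟨C, hC⟩ := exists_lipschitzOnWith_of_contDiffOn isOpen_univ (Set.subset_univ _)
      (isCompact_closedBall (0 : Fin m → ℝ) 1) (convex_closedBall _ _)
      (contDiff_cubeFaceMap i hs).contDiffOn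
    refine (hC.hausdorffMeasure_image_le (Nat.cast_nonneg m)).trans_lt ?_
    have := hausdorffMeasure_pi_real (ι := Fin m)
    rw [Fintype.card_fin] at this
    rw [this]
    exact ENNReal.mul_lt_top (ENNReal.rpow_lt_top_of_nonneg (Nat.cast_nonneg m) ENNReal.coe_ne_top)
      measure_closedBall_lt_top
  rw [show (((m + 1 : ℕ) : ℝ) - 1) = m by push_cast; ring]
  refine (measure_mono (sphere_subset_iUnion_cubeFaceMap m)).trans_lt ?_
  refine (measure_iUnion_fintype_le _ _).trans_lt (ENNReal.sum_lt_top.2 fun i _ => ?_)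
  exact (measure_union_le _ _).trans_lt
    (ENNReal.add_lt_top.2 ⟨hface i 1 one_ne_zero, hface i (-1) (by norm_num)⟩)

/-! ### The mean of the derivative -/

/-- A function which is Lipschitz on the closed unit ball and vanishes on the sphere extends by
zero to a Lipschitz function with the same constant: a segment leaving the ball meets the sphere. -/
lemma lipschitzWith_indicator_closedBall {E : Type*} [NormedAddCommGroup E] [NormedSpace ℝ E]
    {f : E → ℝ} {C : NNReal} (hf : LipschitzOnWith C f (closedBall 0 1))
    (h0 : ∀ z ∈ sphere (0 : E) 1, f z = 0) :
    LipschitzWith C ((closedBall (0 : E) 1).indicator f) := by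
  have key : ∀ x ∈ closedBall (0 : E) 1, ∀ y ∉ closedBall (0 : E) 1,
      |f x| ≤ C * dist x y := by
    intro x hx y hy
    obtain ⟨w, hw, hw1⟩ := (convex_segment x y).isPreconnected.intermediate_value
      (left_mem_segment ℝ x y) (right_mem_segment ℝ x y) continuous_norm.continuousOn
      (show (1 : ℝ) ∈ Set.Icc ‖x‖ ‖y‖ from
        ⟨by simpa using hx, by simpa using (not_le.1 (by simpa using hy)).le⟩)
    have hws : w ∈ sphere (0 : E) 1 := by simpa using hw1
    have h1 := hf.dist_le_mul x hx w (sphere_subset_closedBall hws)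
    rw [h0 w hws, Real.dist_eq, sub_zero] at h1
    refine h1.trans (mul_le_mul_of_nonneg_left ?_ C.2)
    have := dist_add_dist_of_mem_segment hw
    linarith [dist_nonneg (x := w) (y := y)]
  refine LipschitzWith.of_dist_le_mul fun x y => ?_
  by_cases hx : x ∈ closedBall (0 : E) 1 <;> by_cases hy : y ∈ closedBall (0 : E) 1
  · simpa [Set.indicator_of_mem, hx, hy] using hf.dist_le_mul x hx y hy
  · rw [Set.indicator_of_mem hx, Set.indicator_of_notMem hy, Real.dist_eq, sub_zero]
    exact key x hx y hy
  · rw [Set.indicator_of_notMem hx, Set.indicator_of_mem hy, dist_comm, Real.dist_eq, sub_zero,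
      dist_comm]
    exact key y hy x hx
  · rw [Set.indicator_of_notMem hx, Set.indicator_of_notMem hy, dist_self]
    positivity

/-- The derivative of a `C¹` function vanishing on the unit sphere has mean zero over the ball. -/
lemma integral_fderiv_eq_zero {E : Type*} [NormedAddCommGroup E] [NormedSpace ℝ E]
    [FiniteDimensional ℝ E] [MeasurableSpace E] [BorelSpace E] (μ : Measure E) [μ.IsAddHaarMeasure]
    {f : E → ℝ} {U : Set E} (hU : IsOpen U) (hBU : closedBall 0 1 ⊆ U) (hf : ContDiffOn ℝ 1 f U)
    (h0 : ∀ z ∈ sphere (0 : E) 1, f z = 0) (v : E) :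
    ∫ z in closedBall (0 : E) 1, fderiv ℝ f z v ∂μ = 0 := by
  have : ProperSpace E := FiniteDimensional.proper ℝ E
  obtain ⟨C, hC⟩ := exists_lipschitzOnWith_of_contDiffOn hU hBU (isCompact_closedBall (0 : E) 1)
    (convex_closedBall _ _) hf
  have hconst : ∀ (c : ℝ) (x w : E), lineDeriv ℝ (fun _ : E => c) x w = 0 := by
    simp [lineDeriv]
  set g := (closedBall (0 : E) 1).indicator f with hg
  have hgl : LipschitzWith C g := lipschitzWith_indicator_closedBall hC h0
  have hgc : HasCompactSupport g :=
    HasCompactSupport.of_support_subset_isCompact (isCompact_closedBall (0 : E) 1)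
      Set.support_indicator_subset
  -- Integration by parts against the constant `1` gives `∫ lineDeriv g = 0`.
  have hparts := (LipschitzWith.const (1 : ℝ)).integral_lineDeriv_mul_eq (μ := μ) hgl hgc (-v)
  simp only [neg_neg, mul_one, hconst, zero_mul, integral_zero] at hparts
  rw [hparts, ← integral_indicator measurableSet_closedBall]
  refine integral_congr_ae ?_
  have hnull : ∀ᵐ z ∂μ, z ∉ sphere (0 : E) 1 :=
    measure_eq_zero_iff_ae_notMem.1 (Measure.addHaar_sphere_of_ne_zero μ 0 one_ne_zero)
  filter_upwards [hnull] with z hz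
  by_cases hzB : z ∈ closedBall (0 : E) 1
  · rw [Set.indicator_of_mem hzB]
    have hzb : z ∈ ball (0 : E) 1 := by
      rw [← closedBall_sdiff_sphere]; exact ⟨hzB, hz⟩
    have heq : g =ᶠ[nhds z] f := by
      filter_upwards [isOpen_ball.mem_nhds hzb] with y hy
      exact Set.indicator_of_mem (ball_subset_closedBall hy) _
    rw [heq.lineDeriv_eq, DifferentiableAt.lineDeriv_eq_fderiv
      ((hf.differentiableOn one_ne_zero).differentiableAt (hU.mem_nhds (hBU hzB)))]
  · rw [Set.indicator_of_notMem hzB]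
    have heq : g =ᶠ[nhds z] fun _ => 0 := by
      filter_upwards [isClosed_closedBall.isOpen_compl.mem_nhds hzB] with y hy
      exact Set.indicator_of_notMem hy _
    rw [heq.lineDeriv_eq, hconst]

/-! ### The inequality in a fixed direction -/

/-- The convex function `t ↦ t ^ p` lies above its tangent line at `a`, by Bernoulli's
inequality for `t / a`. -/
lemma rpow_tangent_le {a t p : ℝ} (ha : 0 < a) (ht : 0 ≤ t) (hp : 1 ≤ p) :
    a ^ p + p * a ^ (p - 1) * (t - a) ≤ t ^ p := by
  have h := one_add_mul_self_le_rpow_one_add (s := t / a - 1)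
    (by have := div_nonneg ht ha.le; linarith) hp
  rw [add_sub_cancel, Real.div_rpow ht ha.le, le_div_iff₀ (Real.rpow_pos_of_pos ha p)] at h
  refine le_trans (le_of_eq ?_) h
  rw [Real.rpow_sub_one ha.ne']
  field_simp

/-- The quasi-convexity inequality in a single direction `v`. -/
lemma rpow_norm_le_integral {E Y : Type*} [NormedAddCommGroup E] [NormedSpace ℝ E]
    [FiniteDimensional ℝ E] [MeasurableSpace E] [BorelSpace E] (μ : Measure E) [μ.IsAddHaarMeasure]
    [NormedAddCommGroup Y] [NormedSpace ℝ Y] {p : ℝ} (hp : 1 ≤ p) (L : E →L[ℝ] Y) {ψ : E → Y}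
    {U : Set E} (hU : IsOpen U) (hBU : closedBall 0 1 ⊆ U) (hψ : ContDiffOn ℝ 1 ψ U)
    (hbd : ∀ z ∈ sphere (0 : E) 1, ψ z = L z) (v : E) :
    (μ (closedBall (0 : E) 1)).toReal * ‖L v‖ ^ p ≤
      ∫ z in closedBall (0 : E) 1, ‖fderiv ℝ ψ z v‖ ^ p ∂μ := by
  have : ProperSpace E := FiniteDimensional.proper ℝ E
  have hp0 : p ≠ 0 := by positivity
  rcases (norm_nonneg (L v)).eq_or_lt with h | ha
  · rw [← h, Real.zero_rpow hp0, mul_zero]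
    exact integral_nonneg fun z => by positivity
  obtain ⟨ℓ, hℓ, hℓv⟩ := exists_dual_vector'' ℝ (L v)
  simp only [RCLike.ofReal_real_eq_id, id] at hℓv
  set a := ‖L v‖ with haa
  have hcK := isCompact_closedBall (0 : E) 1
  have hcont : ContinuousOn (fun z => fderiv ℝ ψ z v) (closedBall (0 : E) 1) :=
    ((hψ.continuousOn_fderiv_of_isOpen hU le_rfl).mono hBU).clm_apply continuousOn_const
  have hmean : ∫ z in closedBall (0 : E) 1, (ℓ (fderiv ℝ ψ z v) - a) ∂μ = 0 := by
    rw [← integral_fderiv_eq_zero μ (f := fun z => ℓ (ψ z - L z)) hU hBU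
      (ℓ.contDiff.comp_contDiffOn (hψ.sub L.contDiff.contDiffOn))
      (fun z hz => by simp [hbd z hz]) v]
    refine setIntegral_congr_fun measurableSet_closedBall fun z hz => ?_
    have hd : HasFDerivAt ψ (fderiv ℝ ψ z) z :=
      ((hψ.differentiableOn one_ne_zero).differentiableAt (hU.mem_nhds (hBU hz))).hasFDerivAt
    have h2 := (ℓ.hasFDerivAt.comp z (hd.sub L.hasFDerivAt)).fderiv
    have h3 : fderiv ℝ (fun z => ℓ (ψ z - L z)) z = ℓ.comp (fderiv ℝ ψ z - L) := h2
    rw [h3]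
    simp [hℓv]
  have hi1 : IntegrableOn (fun z => ℓ (fderiv ℝ ψ z v) - a) (closedBall (0 : E) 1) μ :=
    ((ℓ.continuous.comp_continuousOn hcont).sub continuousOn_const).integrableOn_compact hcK
  have hi2 : IntegrableOn (fun z => ‖fderiv ℝ ψ z v‖ ^ p) (closedBall (0 : E) 1) μ :=
    (hcont.norm.rpow_const fun _ _ => Or.inr (by positivity)).integrableOn_compact hcK
  have hfin : IntegrableOn (fun _ : E => a ^ p) (closedBall (0 : E) 1) μ :=
    continuousOn_const.integrableOn_compact hcK
  calc (μ (closedBall (0 : E) 1)).toReal * a ^ p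
      = ∫ z in closedBall (0 : E) 1,
          (a ^ p + p * a ^ (p - 1) * (ℓ (fderiv ℝ ψ z v) - a)) ∂μ := by
        rw [integral_add hfin (hi1.const_mul _), integral_const_mul, hmean, mul_zero, add_zero,
          setIntegral_const, smul_eq_mul, Measure.real]
    _ ≤ _ := by
        refine setIntegral_mono (hfin.add (hi1.const_mul _)) hi2 fun z => ?_
        refine le_trans ?_ (rpow_tangent_le ha (norm_nonneg (fderiv ℝ ψ z v)) hp)
        have h1 : ℓ (fderiv ℝ ψ z v) ≤ ‖fderiv ℝ ψ z v‖ :=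
          (le_abs_self _).trans ((ℓ.le_of_opNorm_le hℓ _).trans (one_mul _).le)
        have : 0 ≤ p * a ^ (p - 1) := by positivity
        gcongr

/-! ### Integration over the sphere -/

/-- Quasi-convexity of `𝓘^p_avg`: for `Y` a finite-dimensional normed space, `B` the
closed Euclidean unit ball in `ℝⁿ`, `L : ℝⁿ → Y` linear, and `ψ` a `C¹` map on a
neighborhood of `B` with `ψ = L` on `∂B`:
`ω_n·𝓘^p_avg(‖·‖ ∘ L) ≤ ∫_B 𝓘^p_avg(‖·‖ ∘ d_zψ) dLⁿ(z)`. -/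
theorem Iavg_quasiconvex (n : ℕ) (hn : 1 ≤ n)
    {Y : Type*} [NormedAddCommGroup Y] [NormedSpace ℝ Y] [FiniteDimensional ℝ Y]
    (p : ℝ) (hp : 1 ≤ p)
    (L : EuclideanSpace ℝ (Fin n) →ₗ[ℝ] Y) (ψ : EuclideanSpace ℝ (Fin n) → Y)
    (U : Set (EuclideanSpace ℝ (Fin n))) (hU : IsOpen U)
    (hBU : closedBall (0 : EuclideanSpace ℝ (Fin n)) 1 ⊆ U)
    (hψ : ContDiffOn ℝ 1 ψ U)
    (hbd : ∀ z ∈ sphere (0 : EuclideanSpace ℝ (Fin n)) 1, ψ z = L z) :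
    (volume (closedBall (0 : EuclideanSpace ℝ (Fin n)) 1)).toReal *
        Iavg n p ((normSeminorm ℝ Y).comp L) ≤
      ∫ z in closedBall (0 : EuclideanSpace ℝ (Fin n)) 1,
        Iavg n p ((normSeminorm ℝ Y).comp (fderiv ℝ ψ z).toLinearMap) := by
  set S := sphere (0 : EuclideanSpace ℝ (Fin n)) 1 with hS
  set B := closedBall (0 : EuclideanSpace ℝ (Fin n)) 1 with hB
  set ν : Measure (EuclideanSpace ℝ (Fin n)) := (μH[(n : ℝ) - 1]).restrict S with hν
  have hfinν : IsFiniteMeasure ν :=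
    ⟨by rw [hν, Measure.restrict_apply_univ]; exact hausdorffMeasure_sphere_lt_top hn⟩
  have hSm : MeasurableSet S := isClosed_sphere.measurableSet
  -- `μH[n - 1]` is not s-finite on the whole space, so `Measure.prod_restrict` cannot be applied to
  -- it directly; it is applied to the finite measure `ν`, which is its own restriction to `S`.
  have hνS : ν.restrict S = ν := by rw [hν, Measure.restrict_restrict hSm, Set.inter_self]
  have hp0 : 0 ≤ p := by linarith
  have hSc : IsCompact S := isCompact_sphere _ _
  have hBc : IsCompact B := isCompact_closedBall _ _
  have hL : IntegrableOn (fun v => ‖L v‖ ^ p) S ν :=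
    ((LinearMap.continuous_of_finiteDimensional L).norm.rpow_const
      fun _ => Or.inr hp0).continuousOn.integrableOn_compact hSc
  have hcont : ContinuousOn (fun q : EuclideanSpace ℝ (Fin n) × EuclideanSpace ℝ (Fin n) =>
      ‖fderiv ℝ ψ q.1 q.2‖ ^ p) (B ×ˢ S) := by
    refine ContinuousOn.rpow_const (ContinuousOn.norm ?_) fun _ _ => Or.inr hp0
    exact ((hψ.continuousOn_fderiv_of_isOpen hU le_rfl).mono hBU |>.comp continuousOn_fst
      fun q hq => hq.1).clm_apply continuousOn_snd
  have hF : Integrable (Function.uncurry fun z v : EuclideanSpace ℝ (Fin n) =>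
      ‖fderiv ℝ ψ z v‖ ^ p) ((volume.restrict B).prod ν) := by
    rw [← hνS, Measure.prod_restrict]
    exact hcont.integrableOn_compact (hBc.prod hSc)
  simp only [Iavg, Seminorm.comp_apply, coe_normSeminorm, ContinuousLinearMap.coe_coe]
  rw [integral_const_mul, mul_left_comm, integral_integral_swap hF, ← integral_const_mul]
  rw [IntegrableOn, hνS] at hL
  refine mul_le_mul_of_nonneg_left (integral_mono (hL.const_mul _) hF.integral_prod_right ?_)
    (by positivity)
  intro v
  exact rpow_norm_le_integral volume hp (LinearMap.toContinuousLinearMap L) hU hBU hψ hbd v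
end
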